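/- arXiv:2308.13120 — 2 statements merged into one kernel-verified Lean document; each statement's English description precedes it below -/
import Mathlib

section
/- (Radford) Let H be a co-Frobenius Hopf algebra over a field k, i.e., a Hopf algebra admitting a nonzero left integral ∫ : H → k. Then the antipode S : H → H is bijective. -/
open TensorProduct

/-- A left integral on a Hopf algebra `H` over `k` is a linear functional `f : H → k`
such that `(id ⊗ f)(Δ x) = f x • 1` for all `x`, i.e. `x₍₁₎ • f x₍₂₎ = f x • 1`. -/
def IsLeftIntegral (k : Type*) [CommRing k] (H : Type*) [Ring H] [HopfAlgebra k H]
    (f : H →ₗ[k] k) : Prop :=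
  ∀ x : H, (TensorProduct.rid k H) (LinearMap.lTensor H f (Coalgebra.comul x)) = f x • (1 : H)

/-!
Let `f` be a left integral. Applying `id ⊗ f` to the relations `(S(x₁) ⊗ 1) Δ(x₂) = 1 ⊗ x` and
`Δ(S(y₁)) (y₂ ⊗ 1) = 1 ⊗ S(y)`, multiplied by `Δ(y)` on the right and by `Δ(x)` on the left, gives
`f(x y₂) y₁ = f(x₂ y) S(x₁)` and `f(x S(y₁)) y₂ = f(x₂ S(y)) x₁`.

If `H` is projective, the first identity makes the pairing `(x, z) ↦ f(x z)` nondegenerate in `z`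
with coefficients in any module `M`: if `t = z ⊗ m` satisfies `f(x z) m = 0` for all `x`, then
`z₁ ⊗ f(x z₂) m = S(x₁) ⊗ f(x₂ z) m = 0` for all `x`. By projectivity the natural map
`H ⊗ Hom(H, M) → Hom(H, H ⊗ M)` is injective, so `z₁ ⊗ (x ↦ f(x z₂) m) = 0` and one may replace
`x` by `x S(z₂)`, whence `f(x) t = z₁ ⊗ f(x S(z₂) z₃) m = 0`.

If `S(y) = 0`, the second identity says that `S(y₁) ⊗ y₂` lies in the radical of this pairing.
If `π` is the quotient map by the range of `S`, the first one says that `y₂ ⊗ π(y₁)` does.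
Applying `ε ⊗ id` yields `f(x) y = 0` in the first case and `f(x) y ∈ range S` in the second, and
`x` can be chosen with `f(x) = 1`.
-/

open Coalgebra HopfAlgebra WithConv
open Algebra.TensorProduct (includeLeft includeRight)

section HomTensor

variable {R P X N : Type*} [CommSemiring R] [AddCommMonoid P] [Module R P] [AddCommMonoid X]
  [Module R X] [AddCommMonoid N] [Module R N]

theorem lTensorHomToHomLTensor_injective [Module.Projective R P] :
    Function.Injective (lTensorHomToHomLTensor (.id R) X P N) := by
  classical
  obtain ⟨s, hs⟩ := Module.projective_def'.1 ‹Module.Projective R P›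
  have coord_apply (t : P ⊗[R] (X →ₗ[R] N)) (i : P) (x : X) :
      finsuppScalarLeft R _ P (s.rTensor _ t) i x =
        finsuppScalarLeft R N P
          (s.rTensor N (lTensorHomToHomLTensor (.id R) X P N t x)) i := by
    induction t with
    | zero => simp
    | tmul p g => simp
    | add t u ht hu => simp [ht, hu]
  have rTensor_injective : Function.Injective (s.rTensor (X →ₗ[R] N)) := by
    refine Function.LeftInverse.injective (g := (Finsupp.linearCombination R id).rTensor _) ?_
    intro t
    rw [← LinearMap.rTensor_comp_apply, hs, LinearMap.rTensor_id_apply]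
  intro t u htu
  apply rTensor_injective
  apply (finsuppScalarLeft R _ P).injective
  ext i x
  rw [coord_apply, coord_apply, htu]

end HomTensor

section Counit

variable {R C ι : Type*} [CommSemiring R] [AddCommMonoid C] [Module R C] [Coalgebra R C]

theorem sum_counit_right_smul_left {c : C} (r : Repr R c ι) :
    ∑ i ∈ r.index, counit (R := R) (r.right i) • r.left i = c := by
  have h := congr(TensorProduct.rid R C $(sum_tmul_counit_eq r))
  simpa only [map_sum, TensorProduct.rid_tmul, one_smul] using h

end Counit

section Bialgebra

variable {R H : Type*} [CommSemiring R] [Semiring H] [Bialgebra R H]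

theorem includeLeft_convMul_includeRight :
    toConv (includeLeft : H →ₐ[R] H ⊗[R] H).toLinearMap *
        toConv (includeRight : H →ₐ[R] H ⊗[R] H).toLinearMap =
      toConv (Bialgebra.comulAlgHom R H).toLinearMap := by
  ext x
  rw [(ℛ R x).convMul_apply]
  simp [(ℛ R x).eq]

end Bialgebra

section Convolution

variable {R H B : Type*} [CommSemiring R] [Semiring H] [HopfAlgebra R H] [Semiring B] [Algebra R B]

theorem algHom_comp_antipode_convMul_algHom (g : H →ₐ[R] B) :
    toConv (g.toLinearMap ∘ₗ antipode R) * toConv g.toLinearMap = 1 := by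
  have h := LinearMap.algHom_comp_convMul_distrib g (toConv (antipode R)) (toConv .id)
  rw [LinearMap.antipode_mul_id] at h
  exact WithConv.ofConv_injective (h.symm.trans (by ext; simp))

theorem algHom_convMul_algHom_comp_antipode (g : H →ₐ[R] B) :
    toConv g.toLinearMap * toConv (g.toLinearMap ∘ₗ antipode R) = 1 := by
  have h := LinearMap.algHom_comp_convMul_distrib g (toConv .id) (toConv (antipode R))
  rw [LinearMap.id_mul_antipode] at h
  exact WithConv.ofConv_injective (h.symm.trans (by ext; simp))

theorem sum_tmul_antipode_mul {ι : Type*} {κ : ι → Type*} {z : H} (r : Repr R z ι)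
    (s : (i : ι) → Repr R (r.left i) (κ i)) :
    ∑ i ∈ r.index, ∑ j ∈ (s i).index,
      (s i).left j ⊗ₜ[R] (antipode R ((s i).right j) * r.right i) = z ⊗ₜ[R] (1 : H) := by
  have h := congr((LinearMap.mul' R H ∘ₗ (antipode R).rTensor H).lTensor H
    $(sum_tmul_tmul_eq r s fun i => ℛ R (r.right i)))
  simp only [map_sum, LinearMap.lTensor_tmul, LinearMap.comp_apply, LinearMap.rTensor_tmul,
    LinearMap.mul'_apply, ← TensorProduct.tmul_sum, sum_antipode_mul_eq_smul] at h
  simp only [h, ← TensorProduct.smul_tmul, ← TensorProduct.sum_tmul, sum_counit_right_smul_left]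

theorem sum_antipode_tmul_one_mul_comul {ι : Type*} {x : H} (r : Repr R x ι) :
    ∑ i ∈ r.index, (antipode R (r.left i) ⊗ₜ[R] (1 : H)) * comul (r.right i) =
      (1 : H) ⊗ₜ[R] x := by
  have h : toConv ((includeLeft : H →ₐ[R] H ⊗[R] H).toLinearMap ∘ₗ antipode R) *
        toConv (Bialgebra.comulAlgHom R H).toLinearMap =
      toConv (includeRight : H →ₐ[R] H ⊗[R] H).toLinearMap := by
    rw [← includeLeft_convMul_includeRight, ← mul_assoc, algHom_comp_antipode_convMul_algHom,
      one_mul]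
  have hx := congr($h x)
  rw [r.convMul_apply] at hx
  simpa using hx

theorem sum_comul_antipode_mul_tmul_one {ι : Type*} {y : H} (r : Repr R y ι) :
    ∑ i ∈ r.index, comul (antipode R (r.left i)) * (r.right i ⊗ₜ[R] (1 : H)) =
      (1 : H) ⊗ₜ[R] antipode R y := by
  have h : toConv ((Bialgebra.comulAlgHom R H).toLinearMap ∘ₗ antipode R) *
        toConv (includeLeft : H →ₐ[R] H ⊗[R] H).toLinearMap =
      toConv ((includeRight : H →ₐ[R] H ⊗[R] H).toLinearMap ∘ₗ antipode R) := by
    refine left_inv_eq_right_inv ?_ (algHom_convMul_algHom_comp_antipode includeRight)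
    rw [mul_assoc, includeLeft_convMul_includeRight, algHom_comp_antipode_convMul_algHom]
  have hy := congr($h y)
  rw [r.convMul_apply] at hy
  simpa using hy

end Convolution

section Contraction

variable {R A : Type*} [CommSemiring R] [Semiring A] [Algebra R A]

/-- The contraction `a ⊗ b ↦ f b • a` of the second tensor factor, so that a left integral is a
functional `f` with `contractSnd f (Δ x) = f x • 1`. -/
noncomputable def contractSnd (f : A →ₗ[R] R) : A ⊗[R] A →ₗ[R] A :=
  (TensorProduct.rid R A).toLinearMap ∘ₗ f.lTensor A

@[simp]
theorem contractSnd_tmul (f : A →ₗ[R] R) (a b : A) : contractSnd f (a ⊗ₜ[R] b) = f b • a := by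
  simp [contractSnd]

theorem contractSnd_tmul_one_mul (f : A →ₗ[R] R) (a : A) (t : A ⊗[R] A) :
    contractSnd f ((a ⊗ₜ[R] (1 : A)) * t) = a * contractSnd f t := by
  induction t with
  | zero => simp
  | tmul b c => simp
  | add s t hs ht => simp [mul_add, hs, ht]

theorem contractSnd_mul_tmul_one (f : A →ₗ[R] R) (a : A) (t : A ⊗[R] A) :
    contractSnd f (t * (a ⊗ₜ[R] (1 : A))) = contractSnd f t * a := by
  induction t with
  | zero => simp
  | tmul b c => simp
  | add s t hs ht => simp [add_mul, hs, ht]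

/-- The pairing `(x, z) ↦ f (x * z)` with coefficients in a module `M`: the element `z ⊗ m` is
sent to the linear map `x ↦ f (x * z) • m`. -/
noncomputable def mulPairing (f : A →ₗ[R] R) (M : Type*) [AddCommMonoid M] [Module R M] :
    A ⊗[R] M →ₗ[R] A →ₗ[R] M :=
  dualTensorHom R A M ∘ₗ ((LinearMap.mul R A).compr₂ f).flip.rTensor M

@[simp]
theorem mulPairing_tmul_apply (f : A →ₗ[R] R) {M : Type*} [AddCommMonoid M] [Module R M]
    (z : A) (m : M) (x : A) : mulPairing f M (z ⊗ₜ[R] m) x = f (x * z) • m := by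
  simp [mulPairing]

end Contraction

section ComulPairing

variable {R H : Type*} [CommSemiring R] [Semiring H] [Bialgebra R H]

/-- The map `z ⊗ m ↦ z₁ ⊗ (x ↦ f (x * z₂) • m)`, which pairs only the second leg of the
comultiplication, so that the first one can be substituted into `x` by `substAntipode`. -/
noncomputable def comulPairing (f : H →ₗ[R] R) (M : Type*) [AddCommMonoid M] [Module R M] :
    H ⊗[R] M →ₗ[R] H ⊗[R] (H →ₗ[R] M) :=
  (mulPairing f M).lTensor H ∘ₗ (TensorProduct.assoc R H H M).toLinearMap ∘ₗ comul.rTensor M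

theorem comulPairing_tmul (f : H →ₗ[R] R) {M : Type*} [AddCommMonoid M] [Module R M] {ι : Type*}
    {z : H} (r : Repr R z ι) (m : M) :
    comulPairing f M (z ⊗ₜ[R] m) =
      ∑ i ∈ r.index, r.left i ⊗ₜ[R] mulPairing f M (r.right i ⊗ₜ[R] m) := by
  simp [comulPairing, ← r.eq, TensorProduct.sum_tmul]

end ComulPairing

section Substitution

variable {R H : Type*} [CommSemiring R] [Semiring H] [HopfAlgebra R H]

/-- The map `h ⊗ g ↦ h₁ ⊗ g (x * S(h₂))`, which substitutes the antipode of the second leg of `h`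
into `g` and thereby cancels the comultiplication in `comulPairing`. -/
noncomputable def substAntipode (M : Type*) [AddCommMonoid M] [Module R M] (x : H) :
    H ⊗[R] (H →ₗ[R] M) →ₗ[R] H ⊗[R] M :=
  (TensorProduct.lift (LinearMap.applyₗ ∘ₗ LinearMap.mulLeft R x ∘ₗ antipode R)).lTensor H ∘ₗ
    (TensorProduct.assoc R H H _).toLinearMap ∘ₗ comul.rTensor _

theorem substAntipode_tmul {M : Type*} [AddCommMonoid M] [Module R M] {ι : Type*} {x h : H}
    (r : Repr R h ι) (g : H →ₗ[R] M) :
    substAntipode M x (h ⊗ₜ[R] g) =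
      ∑ i ∈ r.index, r.left i ⊗ₜ[R] g (x * antipode R (r.right i)) := by
  simp [substAntipode, ← r.eq, TensorProduct.sum_tmul]

theorem substAntipode_comulPairing (f : H →ₗ[R] R) {M : Type*} [AddCommMonoid M] [Module R M]
    (x : H) (t : H ⊗[R] M) :
    substAntipode M x (comulPairing f M t) = f x • t := by
  induction t with
  | zero => simp
  | add t u ht hu => simp [ht, hu]
  | tmul z m =>
    let r := ℛ R z
    let g : H →ₗ[R] M := LinearMap.toSpanSingleton R M m ∘ₗ f ∘ₗ LinearMap.mulLeft R x
    calc substAntipode M x (comulPairing f M (z ⊗ₜ[R] m))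
      _ = ∑ i ∈ r.index, ∑ j ∈ (ℛ R (r.left i)).index, (ℛ R (r.left i)).left j ⊗ₜ[R]
            g (antipode R ((ℛ R (r.left i)).right j) * r.right i) := by
        rw [comulPairing_tmul f r, map_sum]
        refine Finset.sum_congr rfl fun i _ => ?_
        rw [substAntipode_tmul (ℛ R (r.left i))]
        simp [g, mul_assoc]
      _ = z ⊗ₜ[R] g 1 := by
        simpa using congr(g.lTensor H $(sum_tmul_antipode_mul r fun i => ℛ R (r.left i)))
      _ = f x • z ⊗ₜ[R] m := by simp [g]

end Substitution

namespace IsLeftIntegral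

variable {k H : Type*} [CommRing k] [Ring H] [HopfAlgebra k H] {f : H →ₗ[k] k}

theorem contractSnd_comul (hf : IsLeftIntegral k H f) (x : H) :
    contractSnd f (comul x) = f x • (1 : H) := hf x

theorem sum_smul_left_eq_sum_smul_antipode (hf : IsLeftIntegral k H f) {ι κ : Type*} {x y : H}
    (r : Repr k x ι) (s : Repr k y κ) :
    ∑ j ∈ s.index, f (x * s.right j) • s.left j =
      ∑ i ∈ r.index, f (r.right i * y) • antipode k (r.left i) := by
  calc ∑ j ∈ s.index, f (x * s.right j) • s.left j
    _ = contractSnd f (((1 : H) ⊗ₜ[k] x) * comul y) := by simp [← s.eq, Finset.mul_sum]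
    _ = ∑ i ∈ r.index,
          contractSnd f ((antipode k (r.left i) ⊗ₜ[k] (1 : H)) * comul (r.right i * y)) := by
      simp only [← sum_antipode_tmul_one_mul_comul r, Finset.sum_mul, map_sum, mul_assoc,
        Bialgebra.comul_mul]
    _ = ∑ i ∈ r.index, f (r.right i * y) • antipode k (r.left i) := by
      simp [contractSnd_tmul_one_mul, hf.contractSnd_comul, -Bialgebra.comul_mul]

theorem sum_smul_right_eq_sum_smul_left (hf : IsLeftIntegral k H f) {ι κ : Type*} {x y : H}
    (r : Repr k x ι) (s : Repr k y κ) :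
    ∑ j ∈ s.index, f (x * antipode k (s.left j)) • s.right j =
      ∑ i ∈ r.index, f (r.right i * antipode k y) • r.left i := by
  symm
  calc ∑ i ∈ r.index, f (r.right i * antipode k y) • r.left i
    _ = contractSnd f (comul x * ((1 : H) ⊗ₜ[k] antipode k y)) := by
      simp [← r.eq, Finset.sum_mul]
    _ = ∑ j ∈ s.index,
          contractSnd f (comul (x * antipode k (s.left j)) * (s.right j ⊗ₜ[k] (1 : H))) := by
      simp only [← sum_comul_antipode_mul_tmul_one s, Finset.mul_sum, map_sum, mul_assoc,
        Bialgebra.comul_mul]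
    _ = ∑ j ∈ s.index, f (x * antipode k (s.left j)) • s.right j := by
      simp [contractSnd_mul_tmul_one, hf.contractSnd_comul, -Bialgebra.comul_mul]

theorem lTensorHomToHomLTensor_comulPairing (hf : IsLeftIntegral k H f) {M : Type*}
    [AddCommMonoid M] [Module k M] (t : H ⊗[k] M) :
    lTensorHomToHomLTensor (.id k) H H M (comulPairing f M t) =
      TensorProduct.map (antipode k) (mulPairing f M t) ∘ₗ comul := by
  induction t with
  | zero => simp
  | add t u ht hu => simp [ht, hu, TensorProduct.map_add_right, LinearMap.add_comp]
  | tmul z m =>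
    ext x
    have h := congr($(hf.sum_smul_left_eq_sum_smul_antipode (ℛ k x) (ℛ k z)) ⊗ₜ[k] m)
    simpa [comulPairing_tmul f (ℛ k z), TensorProduct.sum_tmul, TensorProduct.smul_tmul,
      ← (ℛ k x).eq] using h

theorem smul_eq_zero_of_mulPairing_eq_zero [Module.Projective k H] (hf : IsLeftIntegral k H f)
    {M : Type*} [AddCommMonoid M] [Module k M] {t : H ⊗[k] M} (ht : mulPairing f M t = 0) (x : H) :
    f x • t = 0 := by
  have h : comulPairing f M t = 0 := lTensorHomToHomLTensor_injective <| by
    simp [hf.lTensorHomToHomLTensor_comulPairing, ht]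
  rw [← substAntipode_comulPairing, h, map_zero]

theorem smul_eq_zero_of_antipode_eq_zero [Module.Projective k H] (hf : IsLeftIntegral k H f)
    {y : H} (hy : antipode k y = 0) (x : H) : f x • y = 0 := by
  let s := ℛ k y
  have mulPairing_eq_zero :
      mulPairing f H (∑ j ∈ s.index, antipode k (s.left j) ⊗ₜ[k] s.right j) = 0 := by
    ext x
    simpa [hy] using hf.sum_smul_right_eq_sum_smul_left (ℛ k x) s
  have h := hf.smul_eq_zero_of_mulPairing_eq_zero mulPairing_eq_zero x
  simpa [sum_counit_smul] using congr(TensorProduct.lid k H (counit.rTensor H $h))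

theorem smul_mem_range_antipode [Module.Projective k H] (hf : IsLeftIntegral k H f) (x y : H) :
    f x • y ∈ LinearMap.range (antipode k (A := H)) := by
  let s := ℛ k y
  let π := (LinearMap.range (antipode k (A := H))).mkQ
  have π_antipode (z : H) : π (antipode k z) = 0 := by simp [π]
  have mulPairing_eq_zero :
      mulPairing f _ (∑ j ∈ s.index, s.right j ⊗ₜ[k] π (s.left j)) = 0 := by
    ext x
    simpa [π_antipode] using congr(π $(hf.sum_smul_left_eq_sum_smul_antipode (ℛ k x) s))
  have h := hf.smul_eq_zero_of_mulPairing_eq_zero mulPairing_eq_zero x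
  rw [← Submodule.ker_mkQ (LinearMap.range _), LinearMap.mem_ker, map_smul,
    ← sum_counit_right_smul_left s]
  simpa [π] using congr(TensorProduct.lid k _ (counit.rTensor _ $h))

end IsLeftIntegral

theorem antipode_bijective_of_coFrobenius_general (k : Type*) [CommRing k]
    (H : Type*) [Ring H] [HopfAlgebra k H] [Module.Projective k H]
    (hcf : ∃ f : H →ₗ[k] k, Function.Surjective f ∧ IsLeftIntegral k H f) :
    Function.Bijective (HopfAlgebra.antipode (R := k) (A := H)) := by
  obtain ⟨f, hf_surj, hf⟩ := hcf
  obtain ⟨x, hx⟩ := hf_surj 1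
  constructor
  · refine (injective_iff_map_eq_zero _).2 fun y hy => ?_
    simpa [hx] using hf.smul_eq_zero_of_antipode_eq_zero hy x
  · intro y
    simpa [hx] using hf.smul_mem_range_antipode x y

/-- (Radford) The antipode of a co-Frobenius Hopf algebra, i.e. one admitting a nonzero
left integral, is bijective. -/
theorem antipode_bijective_of_coFrobenius (k : Type*) [Field k]
    (H : Type*) [Ring H] [HopfAlgebra k H]
    (hcf : ∃ f : H →ₗ[k] k, f ≠ 0 ∧ IsLeftIntegral k H f) :
    Function.Bijective (HopfAlgebra.antipode (R := k) (A := H)) := by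
  obtain ⟨f, hf0, hf⟩ := hcf
  exact antipode_bijective_of_coFrobenius_general k H ⟨f, LinearMap.surjective hf0, hf⟩
end

section
/- (Nichols–Zöller) Let k be a field, let A and H be finite-dimensional Hopf algebras over k, and let f : A → H be an injective homomorphism of k-bialgebras. Then H, regarded as a left A-module via f (a • h = f(a)·h), is a free A-module. -/
/-!
Let `n = dim H` and `d = dim H / A⁺H`, where `A⁺` is the augmentation ideal of `A`; we show that `H`
has a basis of `d` elements over `A`.

For an `A`-module `V` of finite dimension put `h(V) = dim Hom_A(H, V)` and `e(V) = h(V) - d dim V`.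
The antipode turns the `n h(V)`-dimensional space `Hom_k(H, Hom_A(H, V))` into a subspace of
`Hom_A(H, Hom_k(H, V))`, where `A` acts on `Hom_k(H, V)` by `(a g)(y) = a₁ g(S(a₂) y)`. Since this
action is trivial on `Hom_A(H, V)`, the quotient `V' = Hom_k(H, V) / Hom_A(H, V)` satisfies
`e(V') ≥ n e(V)`, while `dim V' = n dim V - h(V)`. Iterating `V ↦ V'`, this loss of dimension yields
`j e(V) ≤ n dim V` for every `j`, so `e(V) ≤ 0`. Thus `h(V) ≤ dim Hom_A(A^d, V)` for all `V`, and
therefore `H / rad H`, and with it `H`, is generated by `d` elements.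

Finally, the coaction `h ↦ h₁ ⊗ [h₂]` sends `A`-generators of `H` to `H`-generators of the free
`H`-module `H ⊗ H / A⁺H` of rank `d`. There are only `d` of them, so they are independent over `H`,
and `A`-linear relations between the generators of `H` are trivial.
-/

namespace NicholsZoeller

open Module TensorProduct Coalgebra HopfAlgebra WithConv

/-! ### Modules generated by few elements -/

section Generators

lemma finrank_range_lt_of_ker_lt {k P M N : Type*} [Field k] [AddCommGroup P] [Module k P]
    [AddCommGroup M] [Module k M] [AddCommGroup N] [Module k N] [FiniteDimensional k N]
    {φ : P →ₗ[k] M} {ψ : P →ₗ[k] N} (h : ψ.ker < φ.ker) :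
    finrank k φ.range < finrank k ψ.range := by
  let π : ψ.range →ₗ[k] φ.range :=
    φ.quotKerEquivRange ∘ₗ Submodule.factor h.le ∘ₗ ψ.quotKerEquivRange.symm
  have hπ : Function.Surjective π := by
    simpa [π] using Submodule.factor_surjective h.le
  have : FiniteDimensional k φ.range := .of_surjective π hπ
  refine (LinearMap.finrank_le_finrank_of_surjective hπ).lt_of_ne fun heq => h.not_ge ?_
  have hinj : Function.Injective (Submodule.factor h.le) := by
    simpa [π] using (LinearMap.injective_iff_surjective_of_finrank_eq_finrank heq.symm).2 hπ
  intro x hx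
  rw [← Submodule.Quotient.mk_eq_zero] at hx ⊢
  exact hinj (by simpa using hx)

lemma exists_comp_eq_of_ker_le {R P M C : Type*} [Ring R] [AddCommGroup P] [Module R P]
    [AddCommGroup M] [Module R M] [IsSemisimpleModule R M] [AddCommGroup C] [Module R C]
    {φ : P →ₗ[R] M} {g : P →ₗ[R] C} (hle : φ.ker ≤ g.ker) : ∃ h : M →ₗ[R] C, h ∘ₗ φ = g := by
  obtain ⟨h, hh⟩ := IsSemisimpleModule.extension_property (φ.ker.liftQ φ le_rfl)
    (LinearMap.ker_eq_bot.1 (Submodule.ker_liftQ_eq_bot _ _ _ le_rfl)) (φ.ker.liftQ g hle)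
  refine ⟨h, ?_⟩
  rw [← φ.ker.liftQ_mkQ φ le_rfl, ← LinearMap.comp_assoc, hh, Submodule.liftQ_mkQ]

lemma ker_add_subtype_comp_of_isCompl {R P M : Type*} [Ring R] [AddCommGroup P] [Module R P]
    [AddCommGroup M] [Module R M] {φ : P →ₗ[R] M} {C : Submodule R M} (hC : IsCompl φ.range C)
    (g : P →ₗ[R] C) : (φ + C.subtype ∘ₗ g).ker = φ.ker ⊓ g.ker := by
  refine le_antisymm (fun x hx => ?_) fun x hx => by simp_all
  have hx' : φ x = -(g x : M) := eq_neg_of_add_eq_zero_left hx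
  have hφ : φ x = 0 :=
    Submodule.disjoint_def.1 hC.disjoint _ ⟨x, rfl⟩ (hx' ▸ C.neg_mem (g x).2)
  exact ⟨hφ, by simpa [hφ] using hx'⟩

lemma span_range_eq_top_of_mkQ_jacobson {R M ι : Type*} [Ring R] [AddCommGroup M] [Module R M]
    [IsCoatomic (Submodule R M)] {g : ι → M}
    (hg : Submodule.span R (Set.range ((Module.jacobson R M).mkQ ∘ g)) = ⊤) :
    Submodule.span R (Set.range g) = ⊤ := by
  have hJ : Module.jacobson R M = Order.radical (Submodule R M) := sInf_eq_iInf
  rw [Set.range_comp, ← Submodule.map_span, Submodule.map_mkQ_eq_top, hJ, sup_comm] at hg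
  exact Order.radical_nongenerating hg

variable {k A M : Type*} [Field k] [Ring A] [Algebra k A]
  [AddCommGroup M] [Module k M] [Module A M] [IsScalarTower k A M] [FiniteDimensional k M]

lemma finrank_pi_hom (d : ℕ) (C : Type*) [AddCommGroup C] [Module k C] [Module A C]
    [IsScalarTower k A C] [FiniteDimensional k C] :
    finrank k ((Fin d → A) →ₗ[A] C) = d * finrank k C := by
  let e : (Fin d → C) ≃ₗ[k] ((Fin d → A) →ₗ[A] C) := (Pi.basisFun A (Fin d)).constr k
  simp [← e.finrank_eq, Module.finrank_pi_fintype]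

instance finiteDimensional_hom {C : Type*} [AddCommGroup C] [Module k C] [Module A C]
    [IsScalarTower k A C] [FiniteDimensional k C] : FiniteDimensional k (M →ₗ[A] C) :=
  .of_injective (LinearMap.restrictScalarsₗ k A M C k) (LinearMap.restrictScalars_injective k)

lemma exists_not_ker_le_ker {P : Type*} [AddCommGroup P] [Module k P] [Module A P]
    [IsScalarTower k A P] [IsSemisimpleModule A M] {φ : P →ₗ[A] M}
    {C : Submodule A M} (hC : IsCompl φ.range C) (hC0 : C ≠ ⊥)
    (hle : finrank k (M →ₗ[A] C) ≤ finrank k (P →ₗ[A] C)) :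
    ∃ g : P →ₗ[A] C, ¬ φ.ker ≤ g.ker := by
  by_contra! hker
  have : FiniteDimensional k C :=
    FiniteDimensional.finiteDimensional_submodule (C.restrictScalars k)
  let precomp : (M →ₗ[A] C) →ₗ[k] (P →ₗ[A] C) := LinearMap.lcomp k C φ
  have hsurj : Function.Surjective precomp := fun g => exists_comp_eq_of_ker_le (hker g)
  have : FiniteDimensional k (P →ₗ[A] C) := .of_surjective precomp hsurj
  have hinj : Function.Injective precomp :=
    (LinearMap.injective_iff_surjective_of_finrank_eq_finrank
      (hle.antisymm (LinearMap.finrank_le_finrank_of_surjective hsurj))).2 hsurj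
  have hproj : C.projectionOnto _ hC.symm = 0 := hinj <| LinearMap.ext fun x => by
    simp [precomp]
  exact hC0 <| (Submodule.eq_bot_iff C).2 fun x hx => by
    simpa [hproj] using (Submodule.projectionOnto_apply_of_mem_left hC.symm hx).symm

theorem exists_surjective_of_finrank_hom_le [IsSemisimpleModule A M] {d : ℕ}
    (hd : ∀ C : Submodule A M, finrank k (M →ₗ[A] C) ≤ d * finrank k C) :
    ∃ φ : (Fin d → A) →ₗ[A] M, Function.Surjective φ := by
  let rank (φ : (Fin d → A) →ₗ[A] M) : ℕ := finrank k (φ.restrictScalars k).range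
  obtain ⟨φ, hmax⟩ : ∃ φ, ∀ ψ, finrank k M - rank φ ≤ finrank k M - rank ψ :=
    ⟨_, fun ψ => Function.argmin_le (fun φ => finrank k M - rank φ) ψ⟩
  refine ⟨φ, LinearMap.range_eq_top.1 ?_⟩
  by_contra hns
  obtain ⟨C, hC⟩ := exists_isCompl φ.range
  have : FiniteDimensional k C :=
    FiniteDimensional.finiteDimensional_submodule (C.restrictScalars k)
  obtain ⟨g, hg⟩ := exists_not_ker_le_ker (k := k) hC
    (fun h0 => hns (by simpa [h0] using hC.sup_eq_top)) ((hd C).trans_eq (finrank_pi_hom d C).symm)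
  let ψ : (Fin d → A) →ₗ[A] M := φ + C.subtype ∘ₗ g
  have hker : ψ.ker < φ.ker := by
    rw [ker_add_subtype_comp_of_isCompl hC]
    exact inf_lt_left.2 hg
  have hlt : rank φ < rank ψ := finrank_range_lt_of_ker_lt hker
  have hψ : rank ψ ≤ finrank k M := Submodule.finrank_le _
  have := hmax ψ
  lia

theorem exists_span_range_eq_top_of_finrank_hom_le {d : ℕ}
    (hd : ∀ C : Submodule A (M ⧸ Module.jacobson A M),
      finrank k (M →ₗ[A] C) ≤ d * finrank k C) :
    ∃ g : Fin d → M, Submodule.span A (Set.range g) = ⊤ := by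
  let J := Module.jacobson A M
  have : IsArtinian A M := isArtinian_of_tower k inferInstance
  have : IsNoetherian A M := isNoetherian_of_tower k inferInstance
  have : FiniteDimensional k (M ⧸ J) := .of_surjective (J.mkQ.restrictScalars k) J.mkQ_surjective
  have : IsSemisimpleModule A (M ⧸ J) :=
    (IsArtinian.isSemisimpleModule_iff_jacobson A _).2 (Module.jacobson_quotient_jacobson A M)
  obtain ⟨φ, hφ⟩ := exists_surjective_of_finrank_hom_le (k := k) (A := A) (M := M ⧸ J) (d := d)
    fun C => by
      have : FiniteDimensional k C :=
        FiniteDimensional.finiteDimensional_submodule (C.restrictScalars k)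
      refine (LinearMap.finrank_le_finrank_of_injective
        (f := (LinearMap.lcomp k C J.mkQ : _ →ₗ[k] (M →ₗ[A] C))) ?_).trans (hd C)
      exact fun a b hab => Submodule.linearMap_qext _ hab
  choose g hg using fun i => J.mkQ_surjective (φ (Pi.basisFun A (Fin d) i))
  refine ⟨g, span_range_eq_top_of_mkQ_jacobson ?_⟩
  have hcomp : J.mkQ ∘ g = φ ∘ Pi.basisFun A (Fin d) := funext hg
  rw [hcomp, Set.range_comp, ← Submodule.map_span, Basis.span_eq, Submodule.map_top,
    LinearMap.range_eq_top.2 hφ]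

end Generators

/-! ### Shear maps -/

section Shears

variable {R C A ι : Type*} [CommSemiring R] [AddCommMonoid C] [Module R C] [Coalgebra R C]
  [Semiring A] [Algebra R A]

/-- The map `c ⊗ a ↦ c₁ ⊗ T(c₂) a`. Taking `T` in the convolution algebra makes it multiplicative in
`T`, so that it is invertible when `T` is. -/
noncomputable def shearRight (T : WithConv (C →ₗ[R] A)) : C ⊗[R] A →ₗ[R] C ⊗[R] A :=
  (LinearMap.mul' R A ∘ₗ T.ofConv.rTensor A).lTensor C ∘ₗ
    TensorProduct.assoc R C C A ∘ₗ comul.rTensor A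

/-- The map `a ⊗ c ↦ a T(c₁) ⊗ c₂`, the mirror image of `shearRight`; it reverses convolution
products. -/
noncomputable def shearLeft (T : WithConv (C →ₗ[R] A)) : A ⊗[R] C →ₗ[R] A ⊗[R] C :=
  (LinearMap.mul' R A ∘ₗ T.ofConv.lTensor A).rTensor C ∘ₗ
    (TensorProduct.assoc R A C C).symm ∘ₗ comul.lTensor A

lemma shearRight_tmul (T : WithConv (C →ₗ[R] A)) {c : C} (r : Repr R c ι) (a : A) :
    shearRight T (c ⊗ₜ a) = ∑ i ∈ r.index, r.left i ⊗ₜ (T.ofConv (r.right i) * a) := by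
  simp [shearRight, ← r.eq, sum_tmul]

lemma shearLeft_tmul (T : WithConv (C →ₗ[R] A)) (a : A) {c : C} (r : Repr R c ι) :
    shearLeft T (a ⊗ₜ c) = ∑ i ∈ r.index, (a * T.ofConv (r.left i)) ⊗ₜ r.right i := by
  simp [shearLeft, ← r.eq, tmul_sum]

lemma shearRight_one : shearRight (1 : WithConv (C →ₗ[R] A)) = LinearMap.id := by
  ext c a
  have h := sum_tmul_counit_eq (ℛ R c)
  apply_fun (LinearMap.toSpanSingleton R A a).lTensor C at h
  simpa [-sum_tmul_counit_eq, shearRight_tmul _ (ℛ R c), Algebra.smul_def] using h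

lemma shearLeft_one : shearLeft (1 : WithConv (C →ₗ[R] A)) = LinearMap.id := by
  ext a c
  have h := sum_counit_tmul_eq (ℛ R c)
  apply_fun (LinearMap.toSpanSingleton R A a).rTensor C at h
  simpa [-sum_counit_tmul_eq, shearLeft_tmul _ _ (ℛ R c), Algebra.smul_def, Algebra.commutes]
    using h

lemma shearRight_mul (T T' : WithConv (C →ₗ[R] A)) :
    shearRight (T * T') = shearRight T ∘ₗ shearRight T' := by
  ext c a
  let r := ℛ R c
  have := congr((LinearMap.mulRight R a ∘ₗ LinearMap.mul' R A ∘ₗ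
    TensorProduct.map T.ofConv T'.ofConv).lTensor C
    $(sum_tmul_tmul_eq r (fun i => ℛ R (r.left i)) (fun i => ℛ R (r.right i))))
  simpa [shearRight_tmul _ (ℛ R _), (ℛ R _).convMul_apply, mul_assoc, Finset.sum_mul, tmul_sum, r]
    using this.symm

lemma shearLeft_mul (T T' : WithConv (C →ₗ[R] A)) :
    shearLeft (T * T') = shearLeft T' ∘ₗ shearLeft T := by
  ext a c
  let r := ℛ R c
  have := congr((LinearMap.mulLeft R a ∘ₗ LinearMap.mul' R A ∘ₗ
    TensorProduct.map T.ofConv T'.ofConv).rTensor C ((TensorProduct.assoc R C C C).symm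
    $(sum_tmul_tmul_eq r (fun i => ℛ R (r.left i)) (fun i => ℛ R (r.right i)))))
  simpa [shearLeft_tmul _ _ (ℛ R _), (ℛ R _).convMul_apply, mul_assoc, Finset.mul_sum, sum_tmul, r]
    using this

variable {H : Type*} [Semiring H] [HopfAlgebra R H]

lemma shearRight_antipode_surjective :
    Function.Surjective (shearRight (toConv (antipode R (A := H)))) := by
  have h := shearRight_mul (toConv (antipode R (A := H))) (toConv LinearMap.id)
  rw [LinearMap.antipode_mul_id, shearRight_one] at h
  exact fun t => ⟨_, congr($h.symm t)⟩

lemma shearLeft_id_surjective :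
    Function.Surjective (shearLeft (toConv (LinearMap.id (R := R) (M := H)))) := by
  have h := shearLeft_mul (toConv (antipode R (A := H))) (toConv LinearMap.id)
  rw [LinearMap.antipode_mul_id, shearLeft_one] at h
  exact fun t => ⟨_, congr($h.symm t)⟩

end Shears

/-! ### Equivariant maps -/

section Equivariant

variable {k A H V : Type*} [CommSemiring k] [Semiring A] [Bialgebra k A] [Semiring H]
  [Bialgebra k H] [AddCommMonoid V] [Module k V] (f : A →ₐc[k] H) (ρ : A →ₐ[k] End k V)

/-- The space `Hom_A(H, V)`, where `A` acts on `H` through `f` and on `V` through `ρ`. An action on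
`V` is kept as a map `ρ`, since several actions of `A` on the same space occur. -/
def equivariantHom : Submodule k (H →ₗ[k] V) where
  carrier := {g | ∀ a h, g (f a * h) = ρ a (g h)}
  add_mem' hg hg' a h := by simp [hg a h, hg' a h]
  zero_mem' := by simp
  smul_mem' c g hg a h := by simp [hg a h]

end Equivariant

section Untwist

variable {k A H V : Type*} [CommSemiring k] [Semiring A] [Bialgebra k A] [Semiring H]
  [HopfAlgebra k H] [AddCommMonoid V] [Module k V] (f : A →ₐc[k] H) (ρ : A →ₐ[k] End k V)

/-- The action `(a g)(y) = a₁ g(S(f a₂) y)` of `A` on `Hom_k(H, V)`, for which `Hom_A(H, V)`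
consists of invariants. -/
noncomputable def homRep : A →ₐ[k] End k (H →ₗ[k] V) :=
  (Algebra.TensorProduct.lift
    (AlgHom.ofLinearMap (LinearMap.llcomp k H V V ∘ₗ ρ.toLinearMap)
      (by ext; simp) (fun a b => by ext; simp))
    (AlgHom.ofLinearMap ((LinearMap.llcomp k H H V).flip ∘ₗ LinearMap.mul k H ∘ₗ antipode k ∘ₗ
        (f : A →ₐ[k] H).toLinearMap)
      (by ext; simp) (fun a b => by ext; simp [antipode_mul_antidistrib, mul_assoc]))
    (fun a b => by rw [commute_iff_eq]; ext; simp)).comp (Bialgebra.comulAlgHom k A)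

variable {f ρ}

lemma homRep_apply {ι : Type*} {a : A} (r : Repr k a ι) (g : H →ₗ[k] V) (y : H) :
    homRep f ρ a g y = ∑ i ∈ r.index, ρ (r.left i) (g (antipode k (f (r.right i)) * y)) := by
  simp [homRep, ← r.eq, LinearMap.sum_apply]

lemma homRep_apply_of_mem {g : H →ₗ[k] V} (hg : g ∈ equivariantHom f ρ) (a : A) :
    homRep f ρ a g = counit (R := k) a • g := by
  ext y
  have h := sum_mul_antipode_eq_algebraMap_counit ((ℛ k a).induced f)
  calc homRep f ρ a g y
      = ∑ i ∈ (ℛ k a).index, g (f ((ℛ k a).left i) * (antipode k (f ((ℛ k a).right i)) * y)) := by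
        simp only [homRep_apply (ℛ k a), hg _ _]
    _ = g ((∑ i ∈ (ℛ k a).index, f ((ℛ k a).left i) * antipode k (f ((ℛ k a).right i))) * y) := by
        simp only [Finset.sum_mul, map_sum, mul_assoc]
    _ = counit (R := k) a • g y := by
        simpa [Algebra.algebraMap_eq_smul_one] using congr(g ($h * y))

/-- The transformation `(untwist K)(x)(y) = K(x₁)(S(x₂) y)` of bilinear maps, which turns families
of maps in `Hom_A(H, V)` into elements of `Hom_A(H, Hom_k(H, V))`. -/
noncomputable def untwist : (H →ₗ[k] H →ₗ[k] V) →ₗ[k] (H →ₗ[k] H →ₗ[k] V) :=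
  (lift.equiv (.id k) H H V).symm ∘ₗ
    LinearMap.lcomp k V (shearRight (toConv (antipode k (A := H)))) ∘ₗ lift.equiv (.id k) H H V

lemma untwist_injective : Function.Injective (untwist (k := k) (H := H) (V := V)) :=
  (lift.equiv (.id k) H H V).symm.injective.comp <|
    (LinearMap.lcomp_injective_of_surjective _ shearRight_antipode_surjective).comp
      (lift.equiv (.id k) H H V).injective

lemma untwist_apply {ι : Type*} (K : H →ₗ[k] H →ₗ[k] V) {x : H} (r : Repr k x ι) (y : H) :
    untwist K x y = ∑ i ∈ r.index, K (r.left i) (antipode k (r.right i) * y) := by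
  simp [untwist, shearRight_tmul _ r]

lemma untwist_mem_equivariantHom {K : H →ₗ[k] H →ₗ[k] V}
    (hK : ∀ y, K.flip y ∈ equivariantHom f ρ) : untwist K ∈ equivariantHom f (homRep f ρ) := by
  intro a x
  ext y
  have hK' (a : A) (x y : H) : K (f a * x) y = ρ a (K x y) := hK y a x
  rw [untwist_apply _ (((ℛ k a).induced f).mul (ℛ k x)), homRep_apply (ℛ k a)]
  simp [untwist_apply _ (ℛ k x), antipode_mul_antidistrib, hK', mul_assoc, Finset.sum_product]

end Untwist

section Coinvariants

variable {k A H V W : Type*} [Field k] [Ring A] [Bialgebra k A] [Ring H] [Bialgebra k H]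
  [AddCommGroup V] [Module k V] [AddCommGroup W] [Module k W] (f : A →ₐc[k] H)

/-- The subspace `A⁺H` of `H`, where `A⁺` is the augmentation ideal of `A`: it is spanned by the
elements `f(a) h - ε(a) h`. -/
def coinvariantsKer : Submodule k H :=
  Submodule.span k (Set.range fun p : A × H => f p.1 * p.2 - counit (R := k) p.1 • p.2)

/-- The space of coinvariants `H / A⁺H`, whose dimension is the rank of `H` over `A`. -/
abbrev Coinvariants : Type _ := H ⧸ coinvariantsKer f

lemma Coinvariants.mk_map_mul (a : A) (h : H) :
    (Submodule.Quotient.mk (f a * h) : Coinvariants f) =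
      counit (R := k) a • Submodule.Quotient.mk h := by
  rw [← Submodule.Quotient.mk_smul, Submodule.Quotient.eq]
  exact Submodule.subset_span ⟨(a, h), rfl⟩

variable {f} {ρ : A →ₐ[k] End k V} {σ : A →ₐ[k] End k W}

theorem finrank_equivariantHom_le_add [FiniteDimensional k H] [FiniteDimensional k V]
    [FiniteDimensional k W] {π : V →ₗ[k] W}
    (hπ : ∀ a, π ∘ₗ ρ a = σ a ∘ₗ π) (hker : ∀ a, ∀ v ∈ π.ker, ρ a v = counit (R := k) a • v) :
    finrank k (equivariantHom f ρ) ≤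
      finrank k (equivariantHom f σ) + finrank k (Coinvariants f) * finrank k π.ker := by
  let postcomp : equivariantHom f ρ →ₗ[k] (H →ₗ[k] W) :=
    LinearMap.llcomp k H V W π ∘ₗ (equivariantHom f ρ).subtype
  have hrange : postcomp.range ≤ equivariantHom f σ := by
    rintro _ ⟨g, rfl⟩ a h
    exact (congrArg π (g.2 a h)).trans congr($(hπ a) (g.1 h))
  let extend : (Coinvariants f →ₗ[k] π.ker) →ₗ[k] (H →ₗ[k] V) :=
    LinearMap.lcomp k V (coinvariantsKer f).mkQ ∘ₗ LinearMap.llcomp k _ _ _ π.ker.subtype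
  have hextend : postcomp.ker.map (equivariantHom f ρ).subtype ≤ extend.range := by
    rintro _ ⟨g, hg, rfl⟩
    have hgπ h : g.1 h ∈ π.ker := congr($hg h)
    have hle : coinvariantsKer f ≤ (g.1.codRestrict π.ker hgπ).ker := by
      refine Submodule.span_le.2 ?_
      rintro _ ⟨⟨a, h⟩, rfl⟩
      ext
      simp [g.2 a h, hker a _ (hgπ h)]
    exact ⟨(coinvariantsKer f).liftQ _ hle, rfl⟩
  calc finrank k (equivariantHom f ρ)
      = finrank k postcomp.range + finrank k postcomp.ker :=
        postcomp.finrank_range_add_finrank_ker.symm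
    _ = finrank k postcomp.range + finrank k (postcomp.ker.map (equivariantHom f ρ).subtype) := by
        rw [Submodule.finrank_map_subtype_eq]
    _ ≤ finrank k (equivariantHom f σ) + finrank k extend.range :=
        add_le_add (Submodule.finrank_mono hrange) (Submodule.finrank_mono hextend)
    _ ≤ finrank k (equivariantHom f σ) + finrank k (Coinvariants f →ₗ[k] π.ker) :=
        Nat.add_le_add_left extend.finrank_range_le _
    _ = _ := by rw [Module.finrank_linearMap]

end Coinvariants

/-! ### The excess of a representation -/

section HomQuotient

/-- The representation induced on the quotient by an invariant submodule. -/
def quotientRep {k A V : Type*} [CommRing k] [Semiring A] [Algebra k A] [AddCommGroup V]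
    [Module k V] (ρ : A →ₐ[k] End k V) (T : Submodule k V) (hT : ∀ a, T ≤ T.comap (ρ a)) :
    A →ₐ[k] End k (V ⧸ T) :=
  AlgHom.ofLinearMap
    { toFun := fun a => T.mapQ T (ρ a) (hT a)
      map_add' := fun a b => by ext; simp
      map_smul' := fun c a => by ext; simp }
    (by ext; simp) (fun a b => by ext; simp)

variable {k A H V : Type*} [Field k] [Ring A] [Bialgebra k A] [Ring H] [HopfAlgebra k H]
  [AddCommGroup V] [Module k V] (f : A →ₐc[k] H) (ρ : A →ₐ[k] End k V)

theorem finrank_mul_finrank_equivariantHom_le [FiniteDimensional k H] [FiniteDimensional k V] :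
    finrank k H * finrank k (equivariantHom f ρ) ≤
      finrank k (equivariantHom f (homRep f ρ)) := by
  let L : (H →ₗ[k] equivariantHom f ρ) →ₗ[k] (H →ₗ[k] H →ₗ[k] V) :=
    untwist ∘ₗ LinearMap.lflip.toLinearMap ∘ₗ LinearMap.llcomp k H _ _ (equivariantHom f ρ).subtype
  have hL : Function.Injective L := untwist_injective.comp fun K K' h => by
    ext x y
    exact congr($h y x)
  have hmem K : L K ∈ equivariantHom f (homRep f ρ) :=
    untwist_mem_equivariantHom fun y => (K y).2
  rw [← Module.finrank_linearMap]
  exact LinearMap.finrank_le_finrank_of_injective (f := L.codRestrict _ hmem)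
    fun K K' h => hL congr(Subtype.val $h)

/-- The representation on the quotient of `Hom_k(H, V)` by `Hom_A(H, V)`, through which the
excess is amplified. -/
noncomputable abbrev homQuotientRep : A →ₐ[k] End k ((H →ₗ[k] V) ⧸ equivariantHom f ρ) :=
  quotientRep (homRep f ρ) (equivariantHom f ρ) fun a g hg => by
    simpa [homRep_apply_of_mem hg] using Submodule.smul_mem _ _ hg

theorem finrank_mul_finrank_equivariantHom_le_homQuotientRep [FiniteDimensional k H]
    [FiniteDimensional k V] :
    finrank k H * finrank k (equivariantHom f ρ) ≤
      finrank k (equivariantHom f (homQuotientRep f ρ)) +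
        finrank k (Coinvariants f) * finrank k (equivariantHom f ρ) := by
  have h := finrank_equivariantHom_le_add (f := f) (ρ := homRep f ρ) (σ := homQuotientRep f ρ)
    (π := (equivariantHom f ρ).mkQ) (fun a => by ext; rfl) fun a g hg =>
      homRep_apply_of_mem (by simpa using hg) a
  rw [Submodule.ker_mkQ] at h
  exact (finrank_mul_finrank_equivariantHom_le f ρ).trans h

end HomQuotient

section Excess

universe v

variable {k A : Type*} {H : Type v} [Field k] [Ring A] [Bialgebra k A] [Ring H]

section Bialgebra

variable [Bialgebra k H] (f : A →ₐc[k] H)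

/-- The integer `dim Hom_A(H, V) - dim (H / A⁺H) * dim V`. It vanishes if `H` is free over
`A`; its nonpositivity bounds the number of generators of `H`. -/
noncomputable def excess {V : Type*} [AddCommGroup V] [Module k V] (ρ : A →ₐ[k] End k V) : ℤ :=
  finrank k (equivariantHom f ρ) - finrank k (Coinvariants f) * finrank k V

lemma excess_le_finrank_equivariantHom {V : Type*} [AddCommGroup V] [Module k V]
    (ρ : A →ₐ[k] End k V) : excess f ρ ≤ finrank k (equivariantHom f ρ) :=
  sub_le_self _ (by positivity)

lemma finrank_homQuotient [FiniteDimensional k H] {V : Type*} [AddCommGroup V] [Module k V]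
    [FiniteDimensional k V] (ρ : A →ₐ[k] End k V) :
    (finrank k ((H →ₗ[k] V) ⧸ equivariantHom f ρ) : ℤ) =
      finrank k H * finrank k V - finrank k (equivariantHom f ρ) := by
  have h := (equivariantHom f ρ).finrank_quotient_add_finrank
  rw [Module.finrank_linearMap] at h
  exact eq_sub_of_add_eq (mod_cast h)

end Bialgebra

variable [HopfAlgebra k H] [FiniteDimensional k H] (f : A →ₐc[k] H)

theorem mul_excess_le_excess_homQuotientRep {V : Type*} [AddCommGroup V] [Module k V]
    [FiniteDimensional k V] (ρ : A →ₐ[k] End k V) :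
    finrank k H * excess f ρ ≤ excess f (homQuotientRep f ρ) := by
  have h : (finrank k H * finrank k (equivariantHom f ρ) : ℤ) ≤
      finrank k (equivariantHom f (homQuotientRep f ρ)) +
        finrank k (Coinvariants f) * finrank k (equivariantHom f ρ) :=
    mod_cast finrank_mul_finrank_equivariantHom_le_homQuotientRep f ρ
  rw [excess, excess, finrank_homQuotient]
  linarith

lemma natCast_mul_excess_le [Nontrivial H] (j : ℕ) {V : Type v} [AddCommGroup V] [Module k V]
    [FiniteDimensional k V] (ρ : A →ₐ[k] End k V) :
    j * excess f ρ ≤ finrank k H * finrank k V := by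
  induction j generalizing V with
  | zero => simpa using by positivity
  | succ j ih =>
    have hmul : (finrank k H * (j * excess f ρ) : ℤ) ≤
        finrank k H * (finrank k H * finrank k V - finrank k (equivariantHom f ρ)) := calc
      _ = j * (finrank k H * excess f ρ) := by ring
      _ ≤ j * excess f (homQuotientRep f ρ) := by
        gcongr
        exact mul_excess_le_excess_homQuotientRep f ρ
      _ ≤ finrank k H * finrank k ((H →ₗ[k] V) ⧸ equivariantHom f ρ) := ih (homQuotientRep f ρ)
      _ = _ := by rw [finrank_homQuotient]
    have hj := le_of_mul_le_mul_left hmul (mod_cast finrank_pos)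
    push_cast
    linarith [excess_le_finrank_equivariantHom f ρ]

theorem excess_nonpos {V : Type v} [AddCommGroup V] [Module k V] [FiniteDimensional k V]
    (ρ : A →ₐ[k] End k V) : excess f ρ ≤ 0 := by
  cases subsingleton_or_nontrivial H
  · have : Subsingleton (H →ₗ[k] V) := ⟨fun g g' => LinearMap.ext fun h => by
      simp [Subsingleton.elim h 0]⟩
    exact (excess_le_finrank_equivariantHom f ρ).trans_eq (mod_cast finrank_zero_of_subsingleton)
  by_contra! hpos
  have hle := natCast_mul_excess_le f (finrank k H * finrank k V + 1) ρ
  have hge := le_mul_of_one_le_right (a := (finrank k H * finrank k V + 1 : ℤ)) (by positivity)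
    (Order.one_le_iff_pos.2 hpos)
  push_cast at hle
  linarith

end Excess

/-! ### Independence of generators -/

section Coaction

variable {k A H : Type*} [Field k] [Ring A] [Bialgebra k A] [Ring H]

section Bialgebra

variable [Bialgebra k H] (f : A →ₐc[k] H)

/-- The coaction `h ↦ h₁ ⊗ [h₂]` on `H` of its quotient coalgebra `H / A⁺H`. -/
noncomputable def coact : H →ₗ[k] H ⊗[k] Coinvariants f :=
  (coinvariantsKer f).mkQ.lTensor H ∘ₗ comul

lemma coact_apply {ι : Type*} {h : H} (r : Repr k h ι) :
    coact f h = ∑ i ∈ r.index, r.left i ⊗ₜ Submodule.Quotient.mk (r.right i) := by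
  simp [coact, ← r.eq]

lemma coact_map_mul (a : A) (h : H) : coact f (f a * h) = f a • coact f h := by
  have ha : ∑ i ∈ (ℛ k a).index, counit (R := k) ((ℛ k a).right i) • f ((ℛ k a).left i) = f a := by
    simpa only [map_sum, map_smul, lift.tmul, LinearMap.flip_apply, LinearMap.lsmul_apply, one_smul]
      using congr(f (lift (LinearMap.lsmul k A).flip $(sum_tmul_counit_eq (ℛ k a))))
  refine Eq.trans ?_ congr($ha • coact f h)
  rw [coact_apply f (((ℛ k a).induced f).mul (ℛ k h)), coact_apply f (ℛ k h)]
  simp [Finset.sum_product, Coinvariants.mk_map_mul, Finset.smul_sum, Finset.sum_smul, smul_tmul',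
    Finset.sum_comm (s := (ℛ k h).index)]

end Bialgebra

variable [HopfAlgebra k H] (f : A →ₐc[k] H)

lemma span_range_coact : Submodule.span H (Set.range (coact f)) = ⊤ := by
  let π := (coinvariantsKer f).mkQ.lTensor H
  have hπ : Function.Surjective π :=
    LinearMap.lTensor_surjective H (coinvariantsKer f).mkQ_surjective
  refine Submodule.eq_top_iff'.2 fun t => ?_
  obtain ⟨u, rfl⟩ := hπ.comp shearLeft_id_surjective t
  induction u with
  | zero => simp
  | add u u' hu hu' => simpa using add_mem hu hu'
  | tmul y h =>
    have hyh : π (shearLeft (toConv LinearMap.id) (y ⊗ₜ h)) = y • coact f h := by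
      simp [π, shearLeft_tmul _ y (ℛ k h), coact_apply f (ℛ k h), Finset.smul_sum, smul_tmul']
    rw [Function.comp_apply, hyh]
    exact Submodule.smul_mem _ y (Submodule.subset_span ⟨h, rfl⟩)

variable [FiniteDimensional k H] [Module A H] {f}

lemma linearIndependent_coact_comp (hsmul : ∀ (a : A) (h : H), a • h = f a * h)
    {g : Fin (finrank k (Coinvariants f)) → H} (hg : Submodule.span A (Set.range g) = ⊤) :
    LinearIndependent H (coact f ∘ g) := by
  have : IsNoetherian H H := isNoetherian_of_tower k inferInstance
  have hmem (h : H) : coact f h ∈ Submodule.span H (Set.range (coact f ∘ g)) := by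
    have hh : h ∈ Submodule.span A (Set.range g) := hg ▸ Submodule.mem_top
    induction hh using Submodule.span_induction with
    | mem h hh =>
      obtain ⟨i, rfl⟩ := hh
      exact Submodule.subset_span ⟨i, rfl⟩
    | zero => simp
    | add x y _ _ hx hy => simpa using add_mem hx hy
    | smul a x _ hx =>
      rw [hsmul, coact_map_mul]
      exact Submodule.smul_mem _ _ hx
  cases subsingleton_or_nontrivial H
  · exact Function.injective_of_subsingleton _
  refine linearIndependent_of_top_le_span_of_card_eq_finrank ?_ ?_
  · rw [← span_range_coact f, Submodule.span_le]
    rintro _ ⟨h, rfl⟩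
    exact hmem h
  · simp

theorem linearIndependent_of_span_eq_top (hf : Function.Injective f)
    (hsmul : ∀ (a : A) (h : H), a • h = f a * h)
    {g : Fin (finrank k (Coinvariants f)) → H} (hg : Submodule.span A (Set.range g) = ⊤) :
    LinearIndependent A g := by
  rw [Fintype.linearIndependent_iff]
  intro c hc i
  refine (map_eq_zero_iff f hf).1 <|
    Fintype.linearIndependent_iff.1 (linearIndependent_coact_comp hsmul hg) (f ∘ c) ?_ i
  simpa [hsmul, coact_map_mul] using congr(coact f $hc)

end Coaction

section Freeness

universe v

variable {k A : Type*} {H : Type v} [Field k] [Ring A] [Bialgebra k A] [Ring H]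
  [HopfAlgebra k H] [FiniteDimensional k H] [Module A H] [IsScalarTower k A H] {f : A →ₐc[k] H}

theorem finrank_hom_le_finrank_coinvariants_mul
    (hsmul : ∀ (a : A) (h : H), a • h = f a * h) (V : Type v) [AddCommGroup V] [Module k V]
    [Module A V] [IsScalarTower k A V] [FiniteDimensional k V] :
    finrank k (H →ₗ[A] V) ≤ finrank k (Coinvariants f) * finrank k V := by
  let ρ : A →ₐ[k] End k V := Algebra.lsmul k k V
  have hmem (g : H →ₗ[A] V) : g.restrictScalars k ∈ equivariantHom f ρ := fun a h => by
    simp [ρ, ← hsmul]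
  have hle := LinearMap.finrank_le_finrank_of_injective
    (f := (LinearMap.restrictScalarsₗ k A H V k).codRestrict (equivariantHom f ρ) hmem)
    fun g g' h => LinearMap.restrictScalars_injective k congr(Subtype.val $h)
  have hexcess : (finrank k (equivariantHom f ρ) : ℤ) ≤ finrank k (Coinvariants f) * finrank k V :=
    sub_nonpos.1 (excess_nonpos f ρ)
  exact hle.trans (mod_cast hexcess)

end Freeness

end NicholsZoeller

open NicholsZoeller Module in
theorem nichols_zoller_general {k A H : Type*} [Field k] [Ring A] [Bialgebra k A] [Ring H]
    [HopfAlgebra k H] [FiniteDimensional k H] [Module A H] {f : A →ₐc[k] H}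
    (hf : Function.Injective f) (hsmul : ∀ (a : A) (h : H), a • h = f a * h) :
    Module.Free A H := by
  have : IsScalarTower k A H := ⟨fun c a h => by simp [hsmul]⟩
  obtain ⟨g, hg⟩ := exists_span_range_eq_top_of_finrank_hom_le (k := k) (A := A) (M := H)
    (d := finrank k (Coinvariants f)) fun C =>
      have : FiniteDimensional k C :=
        FiniteDimensional.finiteDimensional_submodule (C.restrictScalars k)
      finrank_hom_le_finrank_coinvariants_mul hsmul C
  exact .of_basis (.mk (linearIndependent_of_span_eq_top hf hsmul hg) hg.ge)

/-- (Nichols–Zöller) If `A` and `H` are finite-dimensional Hopf algebras over a field `k`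
and `f : A → H` is an injective bialgebra homomorphism, then `H` is free as a left
`A`-module, where `A` acts on `H` via `a • h = f a * h`. -/
theorem nichols_zoller (k A H : Type*) [Field k] [Ring A] [Ring H]
    [HopfAlgebra k A] [HopfAlgebra k H] [FiniteDimensional k A] [FiniteDimensional k H]
    (f : A →ₐc[k] H) (hf : Function.Injective f) :
    letI : Module A H := Module.compHom H (RingHomClass.toRingHom f)
    Module.Free A H :=
  letI : Module A H := Module.compHom H (RingHomClass.toRingHom f)
  nichols_zoller_general hf fun _ _ => rfl
end
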